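/- Let α > 1, K > 0, and D(n) := exp(K·(n^{α−1} − 1)) for n ≥ 1. Then for every n ≥ 1 and every k₁,…,k_s ∈ ℕ with Σᵢ kᵢ = n, the Fontené–Ward multinomial coefficient satisfies the explicit bounds K·( n^α/α − Σᵢ ((kᵢ+1)^α − 1)/α ) < ln W_D(n; k₁,…,k_s) < K·( ((n+1)^α − 1)/α − Σᵢ kᵢ^α/α ). -/

import Mathlib

/-- The `D`-factorial `[n]_D! = D n * D (n-1) * ⋯ * D 1`, with `[0]_D! = 1`. -/
noncomputable def Dfact (D : ℕ → ℝ) (n : ℕ) : ℝ := ∏ i ∈ Finset.Icc 1 n, D i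

/-!
If `F` is strictly convex with derivative `f`, the tangent at `j` separates the neighbouring
increments: `F j - F (j - 1) < f j < F (j + 1) - F j`. Summing over `j = 1, …, n` telescopes to
`F n - F 0 < ∑ f j < F (n + 1) - F 1`. If `D j = exp (f j - c)`, then `log W_D(n; k₁, …, k_s)`
is the difference of such a sum for `n` and those for the parts `kᵢ`, because the contributions
of `c` cancel when `∑ kᵢ = n`. The theorem is the case `F x = (K / α) * x ^ α`, `c = K`.
-/

section ConvexSums

variable {F : ℝ → ℝ} {f : ℕ → ℝ} {a b : ℕ}

lemma natCast_mem_Icc_and_add_one_mem_Icc {i : ℕ} (hi : i ∈ Finset.Ico a b) :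
    (i : ℝ) ∈ Set.Icc (a : ℝ) b ∧ (i + 1 : ℝ) ∈ Set.Icc (a : ℝ) b := by
  obtain ⟨hai, hib⟩ := Finset.mem_Ico.mp hi
  exact ⟨by constructor <;> norm_cast; lia, by constructor <;> norm_cast; lia⟩

lemma natCast_sub_one_mem_Icc_and_mem_Icc {i : ℕ} (hi : i ∈ Finset.Ioc a b) :
    (i - 1 : ℝ) ∈ Set.Icc (a : ℝ) b ∧ (i : ℝ) ∈ Set.Icc (a : ℝ) b := by
  obtain ⟨hai, hib⟩ := Finset.mem_Ioc.mp hi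
  have hai' : (a : ℝ) + 1 ≤ i := by exact_mod_cast hai
  have hib' : (i : ℝ) ≤ b := by exact_mod_cast hib
  constructor <;> constructor <;> linarith

lemma sum_Ioc_natCast_sub (F : ℝ → ℝ) (hab : a ≤ b) :
    ∑ i ∈ Finset.Ioc a b, (F i - F (i - 1)) = F b - F a := by
  rw [← Finset.Ico_add_one_add_one_eq_Ioc, ← Finset.sum_Ico_add']
  simpa using Finset.sum_Ico_sub (fun i : ℕ ↦ F i) hab

lemma sum_Ico_le_sub_of_convexOn (hab : a ≤ b) (hF : ConvexOn ℝ (Set.Icc (a : ℝ) b) F)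
    (hf : ∀ i ∈ Finset.Ico a b, HasDerivAt F (f i) i) :
    ∑ i ∈ Finset.Ico a b, f i ≤ F b - F a := by
  rw [← Finset.sum_Ico_sub (fun i : ℕ ↦ F i) hab]
  refine Finset.sum_le_sum fun i hi ↦ ?_
  obtain ⟨hi₀, hi₁⟩ := natCast_mem_Icc_and_add_one_mem_Icc hi
  simpa [slope_def_field] using hF.le_slope_of_hasDerivAt hi₀ hi₁ (lt_add_one _) (hf i hi)

lemma sum_Ico_lt_sub_of_strictConvexOn (hab : a < b)
    (hF : StrictConvexOn ℝ (Set.Icc (a : ℝ) b) F)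
    (hf : ∀ i ∈ Finset.Ico a b, HasDerivAt F (f i) i) :
    ∑ i ∈ Finset.Ico a b, f i < F b - F a := by
  rw [← Finset.sum_Ico_sub (fun i : ℕ ↦ F i) hab.le]
  refine Finset.sum_lt_sum_of_nonempty (Finset.nonempty_Ico.mpr hab) fun i hi ↦ ?_
  obtain ⟨hi₀, hi₁⟩ := natCast_mem_Icc_and_add_one_mem_Icc hi
  simpa [slope_def_field] using hF.lt_slope_of_hasDerivAt hi₀ hi₁ (lt_add_one _) (hf i hi)

lemma sub_le_sum_Ioc_of_convexOn (hab : a ≤ b) (hF : ConvexOn ℝ (Set.Icc (a : ℝ) b) F)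
    (hf : ∀ i ∈ Finset.Ioc a b, HasDerivAt F (f i) i) :
    F b - F a ≤ ∑ i ∈ Finset.Ioc a b, f i := by
  rw [← sum_Ioc_natCast_sub F hab]
  refine Finset.sum_le_sum fun i hi ↦ ?_
  obtain ⟨hi₀, hi₁⟩ := natCast_sub_one_mem_Icc_and_mem_Icc hi
  simpa [slope_def_field] using hF.slope_le_of_hasDerivAt hi₀ hi₁ (sub_one_lt _) (hf i hi)

lemma sub_lt_sum_Ioc_of_strictConvexOn (hab : a < b)
    (hF : StrictConvexOn ℝ (Set.Icc (a : ℝ) b) F)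
    (hf : ∀ i ∈ Finset.Ioc a b, HasDerivAt F (f i) i) :
    F b - F a < ∑ i ∈ Finset.Ioc a b, f i := by
  rw [← sum_Ioc_natCast_sub F hab.le]
  refine Finset.sum_lt_sum_of_nonempty (Finset.nonempty_Ioc.mpr hab) fun i hi ↦ ?_
  obtain ⟨hi₀, hi₁⟩ := natCast_sub_one_mem_Icc_and_mem_Icc hi
  simpa [slope_def_field] using hF.slope_lt_of_hasDerivAt hi₀ hi₁ (sub_one_lt _) (hf i hi)

end ConvexSums

lemma strictConvexOn_const_mul {E : Type*} [AddCommMonoid E] [SMul ℝ E] {S : Set E} {F : E → ℝ}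
    {r : ℝ} (hr : 0 < r) (hF : StrictConvexOn ℝ S F) :
    StrictConvexOn ℝ S fun x ↦ r * F x := by
  refine ⟨hF.1, fun x hx y hy hxy a b ha hb hab ↦ ?_⟩
  calc r * F (a • x + b • y) < r * (a • F x + b • F y) :=
        mul_lt_mul_of_pos_left (hF.2 hx hy hxy ha hb hab) hr
    _ = a • (r * F x) + b • (r * F y) := by simp only [smul_eq_mul]; ring

lemma hasDerivAt_div_mul_rpow (K : ℝ) {α x : ℝ} (hα : α ≠ 0) (hx : x ≠ 0 ∨ 1 ≤ α) :
    HasDerivAt (fun x : ℝ ↦ K / α * x ^ α) (K * x ^ (α - 1)) x := by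
  simpa only [← mul_assoc, div_mul_cancel₀ K hα] using
    (Real.hasDerivAt_rpow_const hx).const_mul (K / α)

section Dfact

variable {f D : ℕ → ℝ} {c : ℝ}

lemma Dfact_eq_exp (hD : ∀ j, 1 ≤ j → D j = Real.exp (f j - c)) (n : ℕ) :
    Dfact D n = Real.exp (∑ j ∈ Finset.Icc 1 n, f j - n * c) := by
  calc Dfact D n = ∏ j ∈ Finset.Icc 1 n, Real.exp (f j - c) :=
        Finset.prod_congr rfl fun j hj ↦ hD j (Finset.mem_Icc.mp hj).1
    _ = Real.exp (∑ j ∈ Finset.Icc 1 n, f j - n * c) := by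
        simp [← Real.exp_sum, Finset.sum_sub_distrib]

lemma log_Dfact_div_prod_Dfact {ι : Type*} {t : Finset ι} {k : ι → ℕ} {n : ℕ}
    (hD : ∀ j, 1 ≤ j → D j = Real.exp (f j - c)) (hsum : ∑ i ∈ t, k i = n) :
    Real.log (Dfact D n / ∏ i ∈ t, Dfact D (k i)) =
      ∑ j ∈ Finset.Icc 1 n, f j - ∑ i ∈ t, ∑ j ∈ Finset.Icc 1 (k i), f j := by
  have hnc : n * c = ∑ i ∈ t, k i * c := by rw [← hsum, Nat.cast_sum, Finset.sum_mul]
  simp only [Dfact_eq_exp hD]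
  rw [← Real.exp_sum, ← Real.exp_sub, Real.log_exp, Finset.sum_sub_distrib, hnc]
  ring

end Dfact

theorem fontene_ward_log_bounds_general {ι : Type*} {t : Finset ι} {F : ℝ → ℝ} {f D : ℕ → ℝ}
    {c : ℝ} {k : ι → ℕ} {n : ℕ} (hF : StrictConvexOn ℝ (Set.Ici 0) F)
    (hf : ∀ j : ℕ, 1 ≤ j → HasDerivAt F (f j) j)
    (hD : ∀ j, 1 ≤ j → D j = Real.exp (f j - c)) (hn : 1 ≤ n) (hsum : ∑ i ∈ t, k i = n) :
    F n - F 0 - ∑ i ∈ t, (F (k i + 1) - F 1) <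
        Real.log (Dfact D n / ∏ i ∈ t, Dfact D (k i)) ∧
      Real.log (Dfact D n / ∏ i ∈ t, Dfact D (k i)) <
        F (n + 1) - F 1 - ∑ i ∈ t, (F (k i) - F 0) := by
  have hF_Icc (a m : ℕ) : StrictConvexOn ℝ (Set.Icc (a : ℝ) m) F :=
    hF.subset (fun x hx ↦ (Nat.cast_nonneg a).trans hx.1) (convex_Icc _ _)
  have hf_Ioc (m : ℕ) : ∀ j ∈ Finset.Ioc 0 m, HasDerivAt F (f j) j := fun j hj ↦
    hf j (Finset.mem_Ioc.mp hj).1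
  have hf_Ico (m : ℕ) : ∀ j ∈ Finset.Ico 1 (m + 1), HasDerivAt F (f j) j := fun j hj ↦
    hf j (Finset.mem_Ico.mp hj).1
  have lower_lt : F n - F 0 < ∑ j ∈ Finset.Icc 1 n, f j := by
    simpa only [Nat.cast_zero, ← Finset.Icc_add_one_left_eq_Ioc, zero_add] using
      sub_lt_sum_Ioc_of_strictConvexOn hn (hF_Icc 0 n) (hf_Ioc n)
  have lower_le (m : ℕ) : F m - F 0 ≤ ∑ j ∈ Finset.Icc 1 m, f j := by
    simpa only [Nat.cast_zero, ← Finset.Icc_add_one_left_eq_Ioc, zero_add] using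
      sub_le_sum_Ioc_of_convexOn m.zero_le (hF_Icc 0 m).convexOn (hf_Ioc m)
  have upper_lt : ∑ j ∈ Finset.Icc 1 n, f j < F (n + 1) - F 1 := by
    simpa only [Nat.cast_add, Nat.cast_one, Finset.Ico_add_one_right_eq_Icc] using
      sum_Ico_lt_sub_of_strictConvexOn (by lia) (hF_Icc 1 (n + 1)) (hf_Ico n)
  have upper_le (m : ℕ) : ∑ j ∈ Finset.Icc 1 m, f j ≤ F (m + 1) - F 1 := by
    simpa only [Nat.cast_add, Nat.cast_one, Finset.Ico_add_one_right_eq_Icc] using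
      sum_Ico_le_sub_of_convexOn (by lia) (hF_Icc 1 (m + 1)).convexOn (hf_Ico m)
  rw [log_Dfact_div_prod_Dfact hD hsum]
  have parts_lower := Finset.sum_le_sum fun i (_ : i ∈ t) ↦ lower_le (k i)
  have parts_upper := Finset.sum_le_sum fun i (_ : i ∈ t) ↦ upper_le (k i)
  constructor <;> linarith

/-- Explicit bounds on the logarithm of the Fontené–Ward multinomial coefficient
`W_D(n; k₁,…,k_s) = [n]_D!/∏ᵢ [kᵢ]_D!` for the admissible sequence
`D(n) = exp(K(n^{α−1} − 1))` with `α > 1` and `K > 0`.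
Powers are real powers (`rpow`). -/
theorem fontene_ward_log_bounds
    (α : ℝ) (hα : 1 < α) (K : ℝ) (hK : 0 < K)
    (D : ℕ → ℝ) (hD : ∀ n : ℕ, 1 ≤ n → D n = Real.exp (K * ((n : ℝ) ^ (α - 1) - 1)))
    (s : ℕ) (k : Fin s → ℕ) (n : ℕ) (hn : 1 ≤ n) (hsum : ∑ i, k i = n) :
    K * ((n : ℝ) ^ α / α - ∑ i, (((k i : ℝ) + 1) ^ α - 1) / α) <
        Real.log (Dfact D n / ∏ i, Dfact D (k i)) ∧
      Real.log (Dfact D n / ∏ i, Dfact D (k i)) <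
        K * ((((n : ℝ) + 1) ^ α - 1) / α - ∑ i, (k i : ℝ) ^ α / α) := by
  have hα₀ : 0 < α := zero_lt_one.trans hα
  have hF := strictConvexOn_const_mul (div_pos hK hα₀) (strictConvexOn_rpow hα)
  have hf (j : ℕ) (_ : 1 ≤ j) := hasDerivAt_div_mul_rpow K hα₀.ne' (x := j) (.inr hα.le)
  have hD' (j : ℕ) (hj : 1 ≤ j) : D j = Real.exp (K * (j : ℝ) ^ (α - 1) - K) := by
    rw [hD j hj, mul_sub_one]
  simpa only [Real.zero_rpow hα₀.ne', Real.one_rpow, mul_zero, sub_zero, ← mul_sub,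
    ← Finset.mul_sum, ← Finset.sum_div, ← sub_div, div_mul_eq_mul_div, ← mul_div_assoc] using
    fontene_ward_log_bounds_general hF hf hD' hn hsum
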